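/- Let G be a bipartite graph with parts X and Y such that every vertex of X has degree at least 1 and every vertex of Y has degree at most n. If |X| ≥ n(p−1)+1, then G contains an induced matching of size p, i.e., there exist distinct vertices x₁,…,x_p ∈ X and y₁,…,y_p ∈ Y such that x_i is adjacent to y_j if and only if i = j. -/

import Mathlib

/-- Induced matching lemma: in a bipartite graph with parts `X, Y`, if every
vertex of `X` has degree at least `1`, every vertex of `Y` has degree at most
`n`, and `|X| ≥ n(p-1)+1`, then there is an induced matching of size `p`. -/
theorem induced_matching_lemma {V : Type*} [Fintype V] (G : SimpleGraph V)
    (X Y : Finset V) (n p : ℕ) (hn : 1 ≤ n) (hp : 1 ≤ p)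
    (hpart : ∀ v : V, (v ∈ X ∧ v ∉ Y) ∨ (v ∈ Y ∧ v ∉ X))
    (hbip : ∀ u v : V, G.Adj u v → (u ∈ X ∧ v ∈ Y) ∨ (u ∈ Y ∧ v ∈ X))
    (hX : ∀ x ∈ X, 1 ≤ Nat.card (G.neighborSet x))
    (hY : ∀ y ∈ Y, Nat.card (G.neighborSet y) ≤ n)
    (hcard : n * (p - 1) + 1 ≤ X.card) :
    ∃ (x y : Fin p → V), Function.Injective x ∧ Function.Injective y ∧
      (∀ i, x i ∈ X) ∧ (∀ i, y i ∈ Y) ∧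
      (∀ i j, G.Adj (x i) (y j) ↔ i = j) := by 
  classical
  have hnb : ∀ x ∈ X, ∃ y ∈ Y, G.Adj x y := by
    intro x hx
    have h := hX x hx
    have h2 : 0 < Nat.card (G.neighborSet x) := h
    obtain ⟨⟨y, hy⟩⟩ := (Nat.card_pos_iff.mp h2).1
    have hxy : G.Adj x y := hy
    refine ⟨y, ?_, hxy⟩
    have a := hpart x
    have b := hbip x y hxy
    tauto
  obtain ⟨S, hS, hmin⟩ := Finset.exists_min_image
    (Y.powerset.filter fun S => ∀ x ∈ X, ∃ y ∈ S, G.Adj x y) Finset.card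
    ⟨Y, by simpa using hnb⟩
  simp only [Finset.mem_filter, Finset.mem_powerset] at hS hmin
  obtain ⟨hSY, hdom⟩ := hS
  have hle : X.card ≤ S.card * n := by
    have hsub : X ⊆ S.biUnion fun y => G.neighborFinset y := by
      intro x hx
      obtain ⟨y, hy, hxy⟩ := hdom x hx
      simp only [Finset.mem_biUnion, SimpleGraph.mem_neighborFinset]
      exact ⟨y, hy, hxy.symm⟩
    refine (Finset.card_le_card hsub).trans (Finset.card_biUnion_le_card_mul _ _ _ ?_)
    intro y hy
    have h := hY y (hSY hy)
    rw [Nat.card_eq_fintype_card, SimpleGraph.card_neighborSet_eq_degree] at h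
    exact h
  have hpS : p ≤ S.card := by
    by_contra hlt
    have h1 : S.card ≤ p - 1 := by omega
    have h2 : n * S.card ≤ n * (p - 1) := Nat.mul_le_mul_left n h1
    rw [Nat.mul_comm] at hle
    omega
  have hpriv : ∀ y ∈ S, ∃ x ∈ X, ∀ z ∈ S, G.Adj x z ↔ z = y := by
    intro y hy
    by_contra hcon
    push Not at hcon
    have hlt := Finset.card_erase_lt_of_mem hy
    have := hmin (S.erase y) ⟨(Finset.erase_subset _ _).trans hSY, by
      intro x hx
      by_contra hno
      push Not at hno
      have hno' : ∀ z ∈ S, G.Adj x z → z = y := by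
        intro z hz hxz
        by_contra hne
        exact hno z (Finset.mem_erase.mpr ⟨hne, hz⟩) hxz
      obtain ⟨w, hw, hxw⟩ := hdom x hx
      have hwy := hno' w hw hxw
      subst hwy
      obtain ⟨z, hz, h⟩ := hcon x hx
      rcases h with ⟨h1, h2⟩ | ⟨h1, h2⟩
      · exact h2 (hno' z hz h1)
      · subst h2
        exact h1 hxw⟩
    omega
  obtain ⟨T, hTS, hT⟩ := Finset.exists_subset_card_eq hpS
  let e := (T.equivFinOfCardEq hT).symm
  have heS : ∀ i, (e i : V) ∈ S := fun i => hTS (e i).2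
  have heinj : Function.Injective fun i => (e i : V) :=
    Subtype.val_injective.comp e.injective
  choose f hf using fun i => hpriv (e i) (heS i)
  have hadj : ∀ i j, G.Adj (f i) (e j) ↔ i = j := by
    intro i j
    rw [(hf i).2 _ (heS j)]
    exact ⟨fun h => (heinj h).symm, fun h => by rw [h]⟩
  refine ⟨f, fun i => e i, ?_, heinj, fun i => (hf i).1, fun i => hSY (heS i), hadj⟩
  intro i j hij
  have h := (hadj j j).mpr rfl
  rw [← hij] at h
  exact (hadj i j).mp h
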